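/- Let s > 5/2. There is a constant C = C(s) > 0 such that for all ε ∈ (0,1), all u ∈ H^s(𝕋) and all η ∈ H^{s-1}(𝕋): |(J_ε(J_ε u · ∂_x J_ε η), η)_{H^{s-1}}| ≤ C (‖∂_x u‖_{L^∞} + ‖∂_x η‖_{L^∞}) (‖u‖²_{H^s} + ‖η‖²_{H^{s-1}}). -/

import Mathlib

noncomputable section
open scoped BigOperators

/-- A (complex-valued) function on the torus `𝕋 = ℝ/2πℤ`, represented by its sequence of
Fourier coefficients `f̂ : ℤ → ℂ`. -/
abbrev FC := ℤ → ℂ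

namespace FC

/-- The Sobolev weight `(1+k²)^s`. -/
def wt (s : ℝ) (k : ℤ) : ℝ := (1 + (k : ℝ) ^ 2) ^ s

/-- `c` represents a function belonging to the Sobolev space `H^s(𝕋)`. -/
def memHs (s : ℝ) (c : FC) : Prop := Summable fun k : ℤ => wt s k * ‖c k‖ ^ 2

/-- The `H^s(𝕋)` norm: `‖f‖²_{H^s} = Σ_{k∈ℤ} (1+k²)^s |f̂(k)|²`. -/
def hsNorm (s : ℝ) (c : FC) : ℝ := Real.sqrt (∑' k : ℤ, wt s k * ‖c k‖ ^ 2)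

/-- The `H^s(𝕋)` inner product `(f,g)_{H^s} = Σ_{k∈ℤ} (1+k²)^s f̂(k) conj(ĝ(k))`
(its real part; the sum is real for real-valued functions). -/
def hsInner (s : ℝ) (c d : FC) : ℝ :=
  (∑' k : ℤ, ((wt s k : ℂ) * (c k * (starRingEnd ℂ) (d k)))).re

/-- `c` represents a real-valued function (conjugate-symmetric coefficients). -/
def isReal (c : FC) : Prop := ∀ k : ℤ, c (-k) = (starRingEnd ℂ) (c k)

/-- The derivative `∂ₓ`, i.e. the Fourier multiplier `ik`. -/
def D1 (c : FC) : FC := fun k => Complex.I * (k : ℂ) * c k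

/-- The pointwise product of functions, i.e. convolution of Fourier coefficients. -/
def mul (c d : FC) : FC := fun k => ∑' j : ℤ, c j * d (k - j)

/-- The represented function, evaluated at `x ∈ ℝ`. -/
def eval (c : FC) (x : ℝ) : ℂ := ∑' k : ℤ, c k * Complex.exp (Complex.I * (k : ℂ) * (x : ℂ))

/-- The `L^∞` norm (supremum of the represented periodic function over ℝ). -/
def linfty (c : FC) : ℝ := ⨆ x : ℝ, ‖eval c x‖

/-- The `W^{1,∞}` norm. -/
def w1infty (c : FC) : ℝ := linfty c + linfty (D1 c)

/-- A Fourier multiplier operator with real symbol `m`. -/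
def mult (m : ℤ → ℝ) (c : FC) : FC := fun k => (m k : ℂ) * c k

/-- The operator `(1-∂ₓ²)⁻¹`, i.e. the Fourier multiplier `(1+k²)⁻¹`. -/
def helmInv : FC → FC := mult fun k => (1 + (k : ℝ) ^ 2)⁻¹

/-- The operator `1-∂ₓ²`, i.e. the Fourier multiplier `1+k²`. -/
def helm : FC → FC := mult fun k => 1 + (k : ℝ) ^ 2

/-- The operator `T̃_ε = (1-ε²∂ₓ²)⁻¹`, i.e. the Fourier multiplier `(1+ε²k²)⁻¹`. -/
def T (ε : ℝ) : FC → FC := mult fun k => (1 + ε ^ 2 * (k : ℝ) ^ 2)⁻¹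

/-- The periodic Hilbert transform, i.e. the Fourier multiplier `-i·sgn(k)`. -/
def hilbert (c : FC) : FC := fun k => -Complex.I * (Int.sign k : ℂ) * c k

/-- The Friedrichs-type mollifier `J_ε`, the Fourier multiplier `ĵ(εk)`. -/
def Jmol (jhat : ℝ → ℝ) (ε : ℝ) : FC → FC := mult fun k => jhat (ε * (k : ℝ))

/-- The generalized Lie derivative `𝓛_ξ f = ξ ∂ₓ f + (∂ₓ ξ) f`. -/
def lie (ξ c : FC) : FC := mul ξ (D1 c) + mul (D1 ξ) c

/-- `𝓛²_ξ f = 𝓛_ξ (𝓛_ξ f)`. -/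
def lie2 (ξ c : FC) : FC := lie ξ (lie ξ c)

/-- The coefficientwise sum `Σ_{k∈ℕ} F k` of a sequence of functions. -/
def tsumFC (F : ℕ → FC) : FC := fun m => ∑' k : ℕ, F k m

/-- The norm on the product space `H^{s₁}×H^{s₂}`. -/
def pairNorm (s₁ s₂ : ℝ) (c d : FC) : ℝ := Real.sqrt (hsNorm s₁ c ^ 2 + hsNorm s₂ d ^ 2)

/-- The inner product on the product space `H^{s₁}×H^{s₂}`:
`((c₁,d₁),(c₂,d₂)) ↦ (c₁,c₂)_{H^{s₁}} + (d₁,d₂)_{H^{s₂}}`. -/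
def pairInner (s₁ s₂ : ℝ) (c₁ d₁ c₂ d₂ : FC) : ℝ := hsInner s₁ c₁ c₂ + hsInner s₂ d₁ d₂

end FC

/-!
Write `w = (1 - ∂ₓ²)^((s - 1) / 2) J_ε η` and `v = J_ε u`. Moving `J_ε` and half of the weight to
the other side, the inner product becomes
`([(1 - ∂ₓ²)^((s - 1) / 2), v] ∂ₓ J_ε η, w) + (v ∂ₓ w, w)` in `L²`. An `L^∞` norm enters only as
the `ℓ²` operator norm of the Laurent matrix `(V̂(k - l))`, and multiplying a matrix entrywise by
`f (φ k + ψ l)`, `f` Schwartz, costs only the `L¹` norm of `𝓕 f` because it averages unitarily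
modulated copies of the matrix.

In the commutator, put `t = log ((1 + k²) / (1 + l²))`. For bounded `t` the difference of the
weights is `(k - l)` times a smooth function of `t` up to bounded diagonal factors, so the matrix
is controlled by that of `∂ₓ u`. For large `t` both weights are dominated by the one at `k - l`;
all derivatives then fall on `u`, whose weighted coefficients are `ℓ¹`.

The transport term `(v ∂ₓ w, w)` is skew-symmetric up to `∂ₓ v` and up to the odd part of `ĵ`,
which makes `v` complex-valued: it contributes `2 ε (∂ₓ u)^(k - l)` times a difference quotient of
`ĵ`, and the factor `ε` is absorbed by `k w_k`, because `x ĵ(x)` is bounded.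
-/

open Finset MeasureTheory
open scoped ComplexConjugate FourierTransform SchwartzMap

section KernelBound

variable {ι κ : Type*} {a b : ι → κ → ℂ} {M N : ℝ}

/-- The sesquilinear form `∑ a k l * f l * conj (g k)` of a matrix `a`, truncated to the finite
index sets `A` and `B`. -/
def kernelForm (a : ι → κ → ℂ) (A : Finset ι) (B : Finset κ) (f : κ → ℂ) (g : ι → ℂ) : ℂ :=
  ∑ k ∈ A, ∑ l ∈ B, a k l * f l * conj (g k)

/-- The matrix `a` acts on `ℓ²` with operator norm at most `M`. The bound `M ‖f‖ ‖g‖` on the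
sesquilinear form is replaced by `M (‖f‖² + ‖g‖²) / 2`, which is equivalent by homogeneity and
avoids square roots. -/
def KernelBound (a : ι → κ → ℂ) (M : ℝ) : Prop :=
  ∀ (A : Finset ι) (B : Finset κ) (f : κ → ℂ) (g : ι → ℂ),
    ‖kernelForm a A B f g‖ ≤ M / 2 * (∑ l ∈ B, ‖f l‖ ^ 2 + ∑ k ∈ A, ‖g k‖ ^ 2)

lemma kernelForm_smul_left (a : ι → κ → ℂ) (A : Finset ι) (B : Finset κ) (c : ℂ) (f : κ → ℂ)
    (g : ι → ℂ) : kernelForm a A B (fun l ↦ c * f l) g = c * kernelForm a A B f g := by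
  simp only [kernelForm, mul_sum]
  exact sum_congr rfl fun k _ ↦ sum_congr rfl fun l _ ↦ by ring

lemma kernelForm_add (a b : ι → κ → ℂ) (A : Finset ι) (B : Finset κ) (f : κ → ℂ) (g : ι → ℂ) :
    kernelForm (fun k l ↦ a k l + b k l) A B f g =
      kernelForm a A B f g + kernelForm b A B f g := by
  simp only [kernelForm, add_mul, sum_add_distrib]

lemma kernelForm_diag_mul (x : ι → ℂ) (a : ι → κ → ℂ) (y : κ → ℂ) (A : Finset ι) (B : Finset κ)
    (f : κ → ℂ) (g : ι → ℂ) :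
    kernelForm (fun k l ↦ x k * a k l * y l) A B f g =
      kernelForm a A B (fun l ↦ y l * f l) (fun k ↦ conj (x k) * g k) := by
  simp only [kernelForm, map_mul, Complex.conj_conj]
  exact sum_congr rfl fun k _ ↦ sum_congr rfl fun l _ ↦ by ring

namespace KernelBound

lemma nonneg [Nonempty κ] (h : KernelBound a M) : 0 ≤ M := by
  have := h ∅ {Classical.arbitrary κ} 1 0
  simp only [kernelForm, sum_empty, norm_zero, sum_singleton, Pi.one_apply, norm_one] at this
  linarith

lemma norm_kernelForm_sq_le (h : KernelBound a M) (A : Finset ι) (B : Finset κ) (f : κ → ℂ)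
    (g : ι → ℂ) :
    ‖kernelForm a A B f g‖ ^ 2 ≤ M ^ 2 * (∑ l ∈ B, ‖f l‖ ^ 2) * ∑ k ∈ A, ‖g k‖ ^ 2 := by
  set P := ∑ l ∈ B, ‖f l‖ ^ 2
  set Q := ∑ k ∈ A, ‖g k‖ ^ 2
  have quadratic (r : ℝ) :
      0 ≤ M / 2 * P * (r * r) + -‖kernelForm a A B f g‖ * r + M / 2 * Q := by
    have hr := h A B (fun l ↦ (r : ℂ) * f l) g
    simp only [kernelForm_smul_left, norm_mul, Complex.norm_real, Real.norm_eq_abs, mul_pow,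
      sq_abs, ← mul_sum] at hr
    have := mul_le_mul_of_nonneg_right (le_abs_self r) (norm_nonneg (kernelForm a A B f g))
    linarith
  have := discrim_le_zero quadratic
  unfold discrim at this
  linarith

lemma sum_norm_sq_col_le (h : KernelBound a M) (A : Finset ι) (l : κ) :
    ∑ k ∈ A, ‖a k l‖ ^ 2 ≤ M ^ 2 := by
  set Q := ∑ k ∈ A, ‖a k l‖ ^ 2
  have form_eq : kernelForm a A {l} 1 (fun k ↦ a k l) = (Q : ℂ) := by
    simp [kernelForm, Q, Complex.mul_conj, Complex.normSq_eq_norm_sq]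
  have hQ : 0 ≤ Q := by positivity
  have := h.norm_kernelForm_sq_le A {l} 1 (fun k ↦ a k l)
  rw [form_eq, Complex.norm_real, Real.norm_of_nonneg hQ, sum_singleton, Pi.one_apply, norm_one,
    one_pow, mul_one, sq] at this
  rcases hQ.eq_or_lt with hQ | hQ
  · rw [← hQ]; positivity
  · exact le_of_mul_le_mul_right this hQ

lemma diag_mul [Nonempty ι] [Nonempty κ] (h : KernelBound a M) {x : ι → ℂ} {y : κ → ℂ} {p q : ℝ}
    (hx : ∀ k, ‖x k‖ ≤ p) (hy : ∀ l, ‖y l‖ ≤ q) :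
    KernelBound (fun k l ↦ x k * a k l * y l) (p * q * M) := by
  intro A B f g
  have hp : 0 ≤ p := (norm_nonneg _).trans (hx (Classical.arbitrary ι))
  have hq : 0 ≤ q := (norm_nonneg _).trans (hy (Classical.arbitrary κ))
  have hM := h.nonneg
  set P := ∑ l ∈ B, ‖f l‖ ^ 2
  set Q := ∑ k ∈ A, ‖g k‖ ^ 2
  have hf : ∑ l ∈ B, ‖y l * f l‖ ^ 2 ≤ q ^ 2 * P := by
    rw [mul_sum]
    refine sum_le_sum fun l _ ↦ ?_
    rw [norm_mul, mul_pow]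
    gcongr
    exact hy l
  have hg : ∑ k ∈ A, ‖conj (x k) * g k‖ ^ 2 ≤ p ^ 2 * Q := by
    rw [mul_sum]
    refine sum_le_sum fun k _ ↦ ?_
    rw [norm_mul, mul_pow, RCLike.norm_conj]
    gcongr
    exact hx k
  rw [kernelForm_diag_mul]
  refine le_of_sq_le_sq ?_ (by positivity)
  calc _ ≤ M ^ 2 * _ * _ := h.norm_kernelForm_sq_le A B _ _
    _ ≤ M ^ 2 * (q ^ 2 * P) * (p ^ 2 * Q) := by gcongr
    _ ≤ (p * q * M / 2 * (P + Q)) ^ 2 := by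
      nlinarith [mul_nonneg (sq_nonneg (p * q * M)) (sq_nonneg (P - Q))]

lemma add (ha : KernelBound a M) (hb : KernelBound b N) :
    KernelBound (fun k l ↦ a k l + b k l) (M + N) := by
  intro A B f g
  rw [kernelForm_add]
  linarith [norm_add_le (kernelForm a A B f g) (kernelForm b A B f g), ha A B f g, hb A B f g]

lemma integral {Ω : Type*} [MeasurableSpace Ω] {μ : Measure Ω} {a : Ω → ι → κ → ℂ} {N : Ω → ℝ}
    (h : ∀ ω, KernelBound (a ω) (N ω)) (ha : ∀ k l, Integrable (fun ω ↦ a ω k l) μ)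
    (hN : Integrable N μ) :
    KernelBound (fun k l ↦ ∫ ω, a ω k l ∂μ) (∫ ω, N ω ∂μ) := by
  intro A B f g
  have hterm (k l) : Integrable (fun ω ↦ a ω k l * f l * conj (g k)) μ :=
    ((ha k l).mul_const _).mul_const _
  have form_eq : kernelForm (fun k l ↦ ∫ ω, a ω k l ∂μ) A B f g =
      ∫ ω, kernelForm (a ω) A B f g ∂μ := by
    simp only [kernelForm]
    rw [integral_finsetSum _ fun k _ ↦ integrable_finsetSum _ fun l _ ↦ hterm k l]
    refine sum_congr rfl fun k _ ↦ ?_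
    rw [integral_finsetSum _ fun l _ ↦ hterm k l]
    exact sum_congr rfl fun l _ ↦ by simp only [integral_mul_const]
  have hform : Integrable (fun ω ↦ kernelForm (a ω) A B f g) μ :=
    integrable_finsetSum _ fun k _ ↦ integrable_finsetSum _ fun l _ ↦ hterm k l
  rw [form_eq]
  calc _ ≤ ∫ ω, ‖kernelForm (a ω) A B f g‖ ∂μ := norm_integral_le_integral_norm _
    _ ≤ ∫ ω, N ω / 2 * (∑ l ∈ B, ‖f l‖ ^ 2 + ∑ k ∈ A, ‖g k‖ ^ 2) ∂μ :=
      integral_mono hform.norm ((hN.div_const 2).mul_const _) fun ω ↦ h ω A B f g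
    _ = _ := by rw [integral_mul_const, integral_div]

end KernelBound

lemma kernelBound_of_norm_le_sub {a : ℤ → ℤ → ℂ} {w : ℤ → ℝ} {S : ℝ}
    (ha : ∀ k l, ‖a k l‖ ≤ w (k - l)) (hw : ∀ F : Finset ℤ, ∑ m ∈ F, w m ≤ S) :
    KernelBound a S := by
  intro A B f g
  have row (k : ℤ) : ∑ l ∈ B, w (k - l) ≤ S := by
    simpa using hw (B.map ⟨fun l ↦ k - l, sub_right_injective⟩)
  have col (l : ℤ) : ∑ k ∈ A, w (k - l) ≤ S := by
    simpa using hw (A.map ⟨fun k ↦ k - l, sub_left_injective⟩)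
  calc ‖kernelForm a A B f g‖
      ≤ ∑ k ∈ A, ∑ l ∈ B, (w (k - l) * ‖f l‖ ^ 2 / 2 + w (k - l) * ‖g k‖ ^ 2 / 2) := by
        refine norm_sum_le_of_le A fun k _ ↦ norm_sum_le_of_le B fun l _ ↦ ?_
        rw [norm_mul, norm_mul, RCLike.norm_conj]
        have := mul_le_mul_of_nonneg_right (ha k l) (mul_nonneg (norm_nonneg (f l))
          (norm_nonneg (g k)))
        nlinarith [mul_nonneg ((norm_nonneg _).trans (ha k l)) (sq_nonneg (‖f l‖ - ‖g k‖))]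
    _ = ∑ l ∈ B, (∑ k ∈ A, w (k - l)) * (‖f l‖ ^ 2 / 2) +
        ∑ k ∈ A, (∑ l ∈ B, w (k - l)) * (‖g k‖ ^ 2 / 2) := by
        simp only [sum_add_distrib, sum_mul, mul_div_assoc]
        rw [sum_comm]
    _ ≤ ∑ l ∈ B, S * (‖f l‖ ^ 2 / 2) + ∑ k ∈ A, S * (‖g k‖ ^ 2 / 2) := by
        gcongr with l _ k _
        exacts [col l, row k]
    _ = _ := by simp only [← mul_sum, ← sum_div]; ring

end KernelBound

section Schwartz

variable {ι κ : Type*} {a : ι → κ → ℂ} {M : ℝ}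

/-- The norm `∫ ‖𝓕 f‖` of `f` in the Wiener algebra; it bounds `f` as a Schur multiplier of sums. -/
def wienerNorm (f : 𝓢(ℝ, ℂ)) : ℝ := ∫ ξ, ‖𝓕 f ξ‖

lemma wienerNorm_nonneg (f : 𝓢(ℝ, ℂ)) : 0 ≤ wienerNorm f :=
  integral_nonneg fun _ ↦ norm_nonneg _

lemma eq_integral_fourier_mul_cexp (f : 𝓢(ℝ, ℂ)) (x : ℝ) :
    f x = ∫ ξ : ℝ, 𝓕 f ξ * Complex.exp (↑(2 * Real.pi * ξ * x) * Complex.I) := by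
  have inversion : (𝓕⁻ (𝓕 f)) x = f x := by simp
  rw [← inversion, SchwartzMap.fourierInv_coe, Real.fourierInv_eq']
  refine integral_congr_ae (.of_forall fun ξ ↦ ?_)
  simp only [smul_eq_mul, RCLike.inner_apply, conj_trivial]
  rw [mul_comm]
  ring_nf

lemma norm_le_wienerNorm (f : 𝓢(ℝ, ℂ)) (x : ℝ) : ‖f x‖ ≤ wienerNorm f := by
  rw [eq_integral_fourier_mul_cexp]
  refine (norm_integral_le_integral_norm _).trans_eq ?_
  simp only [norm_mul, Complex.norm_exp_ofReal_mul_I, mul_one, wienerNorm]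

namespace KernelBound

variable [Nonempty ι] [Nonempty κ]

lemma schwartz_mul (h : KernelBound a M) (f : 𝓢(ℝ, ℂ)) (φ : ι → ℝ) (ψ : κ → ℝ) :
    KernelBound (fun k l ↦ f (φ k + ψ l) * a k l) (wienerNorm f * M) := by
  let e (ξ x : ℝ) : ℂ := Complex.exp (↑(2 * Real.pi * ξ * x) * Complex.I)
  have norm_e (ξ x) : ‖e ξ x‖ = 1 := Complex.norm_exp_ofReal_mul_I _
  have modulated (ξ : ℝ) : KernelBound (fun k l ↦ 𝓕 f ξ * e ξ (φ k) * a k l * e ξ (ψ l))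
      (‖𝓕 f ξ‖ * 1 * M) :=
    h.diag_mul (fun k ↦ by rw [norm_mul, norm_e, mul_one]) fun l ↦ (norm_e ξ (ψ l)).le
  have e_add (ξ x y) : e ξ (x + y) = e ξ x * e ξ y := by
    simp only [e, ← Complex.exp_add]
    push_cast
    ring_nf
  have hint (x : ℝ) : Integrable fun ξ ↦ 𝓕 f ξ * e ξ x := by
    refine (𝓕 f).integrable.mul_bdd (c := 1) ?_ (.of_forall fun ξ ↦ (norm_e ξ x).le)
    exact (by fun_prop : Continuous fun ξ ↦ e ξ x).aestronglyMeasurable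
  have average := KernelBound.integral modulated
    (fun k l ↦ by
      simpa only [e_add, ← mul_assoc, mul_right_comm _ (a k l)] using
        (hint (φ k + ψ l)).mul_const (a k l))
    (((𝓕 f).integrable.norm.mul_const 1).mul_const M)
  convert average using 1
  · ext k l
    rw [eq_integral_fourier_mul_cexp, ← integral_mul_const]
    refine integral_congr_ae (.of_forall fun ξ ↦ ?_)
    change 𝓕 f ξ * e ξ (φ k + ψ l) * a k l = _
    rw [e_add]
    ring
  · rw [integral_mul_const, integral_mul_const, mul_one, wienerNorm]

end KernelBound

lemma dslope_eq_intervalIntegral (f : 𝓢(ℝ, ℂ)) (x y : ℝ) :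
    dslope f x y = ∫ t in (0 : ℝ)..1, SchwartzMap.derivCLM ℂ ℂ f (x + t * (y - x)) := by
  rcases eq_or_ne y x with rfl | hne
  · simp
  · have ftc := intervalIntegral.integral_unitInterval_deriv_eq_sub (f := f) (z₀ := x)
      (z₁ := y - x) (f' := SchwartzMap.derivCLM ℂ ℂ f) (Continuous.continuousOn (by fun_prop))
      fun t _ ↦ f.differentiableAt.hasDerivAt
    rw [add_sub_cancel, ← sub_smul_dslope] at ftc
    exact (smul_right_injective ℂ (sub_ne_zero.2 hne) ftc).symm

lemma KernelBound.dslope_mul [Nonempty ι] [Nonempty κ] (h : KernelBound a M) (f : 𝓢(ℝ, ℂ))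
    (φ₁ φ₂ : ι → ℝ) (ψ₁ ψ₂ : κ → ℝ) :
    KernelBound (fun k l ↦ dslope f (φ₁ k + ψ₁ l) (φ₂ k + ψ₂ l) * a k l)
      (wienerNorm (SchwartzMap.derivCLM ℂ ℂ f) * M) := by
  let f' := SchwartzMap.derivCLM ℂ ℂ f
  have segment (t : ℝ) : KernelBound
      (fun k l ↦ f' ((φ₁ k + t * (φ₂ k - φ₁ k)) + (ψ₁ l + t * (ψ₂ l - ψ₁ l))) * a k l)
      (wienerNorm f' * M) := h.schwartz_mul f' _ _
  have average := KernelBound.integral (μ := volume.restrict (Set.Ioc 0 1)) segment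
    (fun k l ↦ (by fun_prop : Continuous _).integrableOn_Ioc) (integrable_const _)
  convert average using 1
  · ext k l
    rw [dslope_eq_intervalIntegral, intervalIntegral.integral_of_le zero_le_one,
      integral_mul_const]
    congr 3 with t
    exact congrArg f' (by ring)
  · simp [f']

end Schwartz

section Laurent

/-- The character `x ↦ e^{ikx}` of the torus. -/
def torusChar (k : ℤ) (x : ℝ) : ℂ := Complex.exp (Complex.I * k * x)

/-- The trigonometric polynomial with coefficients `f` on the frequencies in `B`. -/
def trigPoly (B : Finset ℤ) (f : ℤ → ℂ) (x : ℝ) : ℂ := ∑ l ∈ B, f l * torusChar l x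

lemma torusChar_add (k l : ℤ) (x : ℝ) : torusChar (k + l) x = torusChar k x * torusChar l x := by
  simp only [torusChar, ← Complex.exp_add]
  push_cast
  ring_nf

lemma conj_torusChar (k : ℤ) (x : ℝ) : conj (torusChar k x) = torusChar (-k) x := by
  simp [torusChar, ← Complex.exp_conj]

lemma norm_torusChar (k : ℤ) (x : ℝ) : ‖torusChar k x‖ = 1 := by
  simp [torusChar, Complex.norm_exp]

@[fun_prop]
lemma continuous_torusChar (k : ℤ) : Continuous (torusChar k) := by
  unfold torusChar
  fun_prop

@[fun_prop]
lemma continuous_trigPoly (B : Finset ℤ) (f : ℤ → ℂ) : Continuous (trigPoly B f) := by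
  unfold trigPoly
  fun_prop

lemma integral_torusChar (k : ℤ) :
    ∫ x in (0 : ℝ)..2 * Real.pi, torusChar k x = if k = 0 then (2 * Real.pi : ℂ) else 0 := by
  split_ifs with hk
  · simp [torusChar, hk]
  · have periodic : Complex.exp (Complex.I * k * (2 * Real.pi : ℝ)) = 1 :=
      Complex.exp_eq_one_iff.2 ⟨k, by push_cast; ring⟩
    simp only [torusChar]
    rw [integral_exp_mul_complex (by simp [hk]), periodic]
    simp

namespace FC

variable {V : FC}

lemma continuous_eval (hV : Summable fun k ↦ ‖V k‖) : Continuous (eval V) :=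
  continuous_tsum (fun k ↦ by fun_prop) hV fun k x ↦ by
    rw [norm_mul, ← torusChar, norm_torusChar, mul_one]

lemma norm_eval_le_linfty (hV : Summable fun k ↦ ‖V k‖) (x : ℝ) : ‖eval V x‖ ≤ linfty V := by
  refine le_ciSup (f := fun x ↦ ‖eval V x‖) ⟨∑' k, ‖V k‖, ?_⟩ x
  rintro _ ⟨y, rfl⟩
  have norm_term (k : ℤ) : ‖V k * torusChar k y‖ = ‖V k‖ := by
    rw [norm_mul, norm_torusChar, mul_one]
  refine (norm_tsum_le_tsum_norm (f := fun k ↦ V k * torusChar k y) ?_).trans_eq ?_ <;>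
    simp only [norm_term, hV]

lemma integral_eval_mul_torusChar (hV : Summable fun k ↦ ‖V k‖) (m : ℤ) :
    ∫ x in (0 : ℝ)..2 * Real.pi, eval V x * torusChar (-m) x = 2 * Real.pi * V m := by
  have termwise := intervalIntegral.hasSum_intervalIntegral_of_summable_norm (a := 0)
    (b := 2 * Real.pi)
    (f := fun k ↦ (⟨fun x ↦ V k * torusChar k x * torusChar (-m) x, by fun_prop⟩ : C(ℝ, ℂ)))
    (hV.of_nonneg_of_le (fun _ ↦ norm_nonneg _) fun k ↦ by
      refine (ContinuousMap.norm_le _ (norm_nonneg _)).2 fun x ↦ ?_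
      simp [norm_torusChar])
  have integral_term (k : ℤ) :
      ∫ x in (0 : ℝ)..2 * Real.pi, V k * torusChar k x * torusChar (-m) x =
        if k = m then 2 * Real.pi * V m else 0 := by
    simp only [mul_assoc (V k), ← torusChar_add, ← sub_eq_add_neg]
    rw [intervalIntegral.integral_const_mul, integral_torusChar]
    simp only [sub_eq_zero, mul_ite, mul_zero]
    split_ifs with hk
    · rw [hk, mul_comm]
    · rfl
  simp only [ContinuousMap.coe_mk, integral_term] at termwise
  rw [← termwise.unique (hasSum_ite_eq m _)]
  refine intervalIntegral.integral_congr fun x _ ↦ ?_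
  exact tsum_mul_right.symm

lemma integral_eval_mul_trigPoly (hV : Summable fun k ↦ ‖V k‖) (A B : Finset ℤ) (f g : ℤ → ℂ) :
    ∫ x in (0 : ℝ)..2 * Real.pi, eval V x * (trigPoly B f x * conj (trigPoly A g x)) =
      2 * Real.pi * kernelForm (fun k l ↦ V (k - l)) A B f g := by
  have expand (x : ℝ) : eval V x * (trigPoly B f x * conj (trigPoly A g x)) =
      ∑ k ∈ A, ∑ l ∈ B, f l * conj (g k) * (eval V x * torusChar (-(k - l)) x) := by
    simp only [trigPoly, map_sum, map_mul, conj_torusChar]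
    rw [sum_mul_sum, sum_comm]
    simp only [mul_sum]
    refine sum_congr rfl fun k _ ↦ sum_congr rfl fun l _ ↦ ?_
    rw [neg_sub, sub_eq_add_neg, torusChar_add]
    ring
  have hcont := continuous_eval hV
  simp only [expand, kernelForm, mul_sum]
  rw [intervalIntegral.integral_finsetSum fun k _ ↦ Continuous.intervalIntegrable (by fun_prop) _ _]
  refine sum_congr rfl fun k _ ↦ ?_
  rw [intervalIntegral.integral_finsetSum fun l _ ↦ Continuous.intervalIntegrable (by fun_prop) _ _]
  refine sum_congr rfl fun l _ ↦ ?_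
  rw [intervalIntegral.integral_const_mul, integral_eval_mul_torusChar hV]
  ring

lemma integral_norm_trigPoly_sq (B : Finset ℤ) (f : ℤ → ℂ) :
    ∫ x in (0 : ℝ)..2 * Real.pi, ‖trigPoly B f x‖ ^ 2 = 2 * Real.pi * ∑ l ∈ B, ‖f l‖ ^ 2 := by
  have eval_one (x : ℝ) : eval (Pi.single 0 1) x = 1 := by
    rw [eval, tsum_eq_single 0 fun k hk ↦ by simp [hk]]
    simp
  have summable_one : Summable fun k ↦ ‖(Pi.single 0 1 : FC) k‖ :=
    summable_of_ne_finset_zero (s := {0}) fun k hk ↦ by simp_all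
  have form_eq : kernelForm (fun k l ↦ (Pi.single 0 1 : FC) (k - l)) B B f f =
      ∑ l ∈ B, (‖f l‖ : ℂ) ^ 2 := by
    refine sum_congr rfl fun k hk ↦ ?_
    rw [sum_eq_single_of_mem k hk fun l _ hl ↦ by simp [sub_eq_zero, hl.symm]]
    simp [Complex.mul_conj']
  have key := integral_eval_mul_trigPoly summable_one B B f f
  simp only [eval_one, one_mul, Complex.mul_conj', form_eq] at key
  have : ((∫ x in (0 : ℝ)..2 * Real.pi, ‖trigPoly B f x‖ ^ 2 : ℝ) : ℂ) =
      (2 * Real.pi * ∑ l ∈ B, ‖f l‖ ^ 2 : ℝ) := by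
    rw [← intervalIntegral.integral_ofReal]
    push_cast
    exact key
  exact_mod_cast this

lemma kernelBound_linfty (hV : Summable fun k ↦ ‖V k‖) :
    KernelBound (fun k l ↦ V (k - l)) (linfty V) := by
  intro A B f g
  have hpi := Real.two_pi_pos
  have pointwise (x : ℝ) : ‖eval V x * (trigPoly B f x * conj (trigPoly A g x))‖ ≤
      linfty V / 2 * (‖trigPoly B f x‖ ^ 2 + ‖trigPoly A g x‖ ^ 2) := by
    have hx := norm_eval_le_linfty hV x
    rw [norm_mul, norm_mul, RCLike.norm_conj]
    nlinarith [mul_le_mul_of_nonneg_right hx (mul_nonneg (norm_nonneg (trigPoly B f x))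
        (norm_nonneg (trigPoly A g x))), mul_nonneg ((norm_nonneg _).trans hx)
        (sq_nonneg (‖trigPoly B f x‖ - ‖trigPoly A g x‖))]
  have integrated : ‖2 * Real.pi * kernelForm (fun k l ↦ V (k - l)) A B f g‖ ≤
      ∫ x in (0 : ℝ)..2 * Real.pi,
        linfty V / 2 * (‖trigPoly B f x‖ ^ 2 + ‖trigPoly A g x‖ ^ 2) := by
    rw [← integral_eval_mul_trigPoly hV]
    exact intervalIntegral.norm_integral_le_of_norm_le hpi.le
      (.of_forall fun x _ ↦ pointwise x) (Continuous.intervalIntegrable (by fun_prop) _ _)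
  have hsq (C : Finset ℤ) (h : ℤ → ℂ) :
      IntervalIntegrable (fun x ↦ ‖trigPoly C h x‖ ^ 2) volume 0 (2 * Real.pi) :=
    Continuous.intervalIntegrable (by fun_prop) _ _
  rw [intervalIntegral.integral_const_mul, intervalIntegral.integral_add (hsq B f) (hsq A g),
    integral_norm_trigPoly_sq, integral_norm_trigPoly_sq, norm_mul, ← mul_add, mul_left_comm,
    ← Complex.ofReal_ofNat, ← Complex.ofReal_mul, Complex.norm_real,
    Real.norm_of_nonneg hpi.le] at integrated
  exact le_of_mul_le_mul_left integrated hpi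

end FC

end Laurent

namespace FC

section Sobolev

variable {r s t : ℝ} {c : FC}

lemma wt_pos (s : ℝ) (k : ℤ) : 0 < wt s k := Real.rpow_pos_of_pos (by positivity) s

lemma wt_add (s t : ℝ) (k : ℤ) : wt (s + t) k = wt s k * wt t k :=
  Real.rpow_add (by positivity) s t

lemma wt_one (k : ℤ) : wt 1 k = 1 + (k : ℝ) ^ 2 := Real.rpow_one _

lemma wt_mono (h : s ≤ t) (k : ℤ) : wt s k ≤ wt t k :=
  Real.rpow_le_rpow_of_exponent_le (by nlinarith) h

lemma abs_le_wt (ht : 1 / 2 ≤ t) (k : ℤ) : |(k : ℝ)| ≤ wt t k := by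
  refine le_trans ?_ (wt_mono ht k)
  rw [wt, ← Real.sqrt_eq_rpow]
  exact Real.abs_le_sqrt (by linarith)

lemma summable_wt (hr : r < -1 / 2) : Summable (wt r) := by
  have tail : Summable fun k : ℤ ↦ |(k : ℝ)| ^ (2 * r) := by
    simpa using Real.summable_abs_int_rpow (b := -(2 * r)) (by linarith)
  refine (tail.add (hasSum_ite_eq 0 1).summable).of_nonneg_of_le (fun k ↦ (wt_pos r k).le)
    fun k ↦ ?_
  split_ifs with hk
  · simpa [wt, hk] using Real.rpow_nonneg le_rfl (2 * r)
  · have hk : 0 < |(k : ℝ)| := by positivity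
    rw [add_zero, Real.rpow_mul hk.le, wt]
    refine Real.rpow_le_rpow_of_nonpos (by positivity) ?_ (by linarith)
    rw [Real.rpow_two, sq_abs]
    linarith

lemma sum_wt_mul_norm_sq_le (hc : memHs s c) (F : Finset ℤ) :
    ∑ k ∈ F, wt s k * ‖c k‖ ^ 2 ≤ hsNorm s c ^ 2 := by
  have hnonneg (k) : 0 ≤ wt s k * ‖c k‖ ^ 2 := mul_nonneg (wt_pos s k).le (sq_nonneg _)
  rw [hsNorm, Real.sq_sqrt (tsum_nonneg hnonneg)]
  exact hc.sum_le_tsum F fun k _ ↦ hnonneg k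

lemma sum_wt_mul_norm_le (hc : memHs r c) (ht : 2 * t + 1 / 2 < r) (F : Finset ℤ) :
    ∑ k ∈ F, wt t k * ‖c k‖ ≤ √(∑' k, wt (2 * t - r) k) * hsNorm r c := by
  have split (k) : wt t k * ‖c k‖ = √(wt (2 * t - r) k) * √(wt r k * ‖c k‖ ^ 2) := by
    rw [← Real.sqrt_mul (wt_pos _ k).le, ← mul_assoc, ← wt_add,
      show 2 * t - r + r = t + t by ring, wt_add, ← sq, ← mul_pow,
      Real.sqrt_sq (mul_nonneg (wt_pos t k).le (norm_nonneg _))]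
  simp only [split]
  refine (Real.sum_sqrt_mul_sqrt_le F (fun k ↦ (wt_pos _ k).le)
    fun k ↦ mul_nonneg (wt_pos r k).le (sq_nonneg _)).trans ?_
  gcongr
  · exact (summable_wt (by linarith)).sum_le_tsum F fun k _ ↦ (wt_pos _ k).le
  · exact Real.sqrt_le_iff.2 ⟨Real.sqrt_nonneg _, sum_wt_mul_norm_sq_le hc F⟩

lemma summable_wt_mul_norm (hc : memHs r c) (ht : 2 * t + 1 / 2 < r) :
    Summable fun k ↦ wt t k * ‖c k‖ :=
  summable_of_sum_le (fun k ↦ mul_nonneg (wt_pos t k).le (norm_nonneg _))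
    (sum_wt_mul_norm_le hc ht)

lemma summable_norm (hc : memHs r c) (hr : 1 / 2 < r) : Summable fun k ↦ ‖c k‖ := by
  simpa [wt] using summable_wt_mul_norm (t := 0) hc (by linarith)

lemma norm_D1 (c : FC) (k : ℤ) : ‖D1 c k‖ = |(k : ℝ)| * ‖c k‖ := by
  simp [D1]

lemma summable_norm_D1 (hc : memHs r c) (hr : 3 / 2 < r) : Summable fun k ↦ ‖D1 c k‖ :=
  (summable_wt_mul_norm (t := 1 / 2) hc (by linarith)).of_nonneg_of_le (fun _ ↦ norm_nonneg _)
    fun k ↦ by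
      rw [norm_D1]
      exact mul_le_mul_of_nonneg_right (abs_le_wt le_rfl k) (norm_nonneg _)

end Sobolev

end FC

section PowQuotient

open scoped ContDiff

/-- The entire function `(e^z - 1) / z`. -/
def expSlope : ℂ → ℂ := dslope Complex.exp 0

lemma mul_expSlope (z : ℂ) : z * expSlope z = Complex.exp z - 1 := by
  simpa [expSlope] using sub_smul_dslope Complex.exp 0 z

lemma contDiff_expSlope : ContDiff ℂ ∞ expSlope :=
  (differentiableOn_univ.1 <| (Complex.differentiableOn_dslope Filter.univ_mem).2
    Complex.differentiable_exp.differentiableOn).contDiff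

lemma expSlope_ofReal_ne_zero (t : ℝ) : expSlope t ≠ 0 := by
  rcases eq_or_ne t 0 with rfl | ht
  · simp [expSlope]
  · refine right_ne_zero_of_mul (a := (t : ℂ)) ?_
    rw [mul_expSlope, sub_ne_zero]
    exact_mod_cast mt (Real.exp_eq_one_iff t).1 ht

/-- A smooth cutoff on the logarithmic scale, equal to `1` for ratios in `[1/4, 4]`. -/
def logCutoff : ContDiffBump (0 : ℝ) :=
  ⟨Real.log 4, Real.log 4 + 1, Real.log_pos (by norm_num), lt_add_one _⟩

lemma contDiff_powQuotient (σ τ : ℝ) : ContDiff ℝ ∞ fun t : ℝ ↦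
    (logCutoff t : ℂ) * (Complex.exp (σ * t) * (τ * expSlope (τ * t) * (expSlope t)⁻¹)) := by
  have hslope : ContDiff ℝ ∞ expSlope := contDiff_expSlope.restrict_scalars ℝ
  have hofReal : ContDiff ℝ ∞ Complex.ofReal := Complex.ofRealCLM.contDiff
  exact (hofReal.comp logCutoff.contDiff).mul ((contDiff_const.mul hofReal).cexp.mul
    ((contDiff_const.mul (hslope.comp (contDiff_const.mul hofReal))).mul
      ((hslope.comp hofReal).inv expSlope_ofReal_ne_zero)))

/-- The Schwartz function `χ(t) e^{σt} (e^{τt} - 1) / (e^t - 1)`, with `χ` the cutoff `logCutoff`.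
At `t = log (X / Y)` it is a truncated divided difference of powers:
`(X / Y)^σ ((X / Y)^τ - 1) / (X / Y - 1)`. -/
def powQuotient (σ τ : ℝ) : 𝓢(ℝ, ℂ) :=
  HasCompactSupport.toSchwartzMap (f := fun t : ℝ ↦
    (logCutoff t : ℂ) * (Complex.exp (σ * t) * (τ * expSlope (τ * t) * (expSlope t)⁻¹)))
    (logCutoff.hasCompactSupport.comp_left Complex.ofReal_zero).mul_right
    (contDiff_powQuotient σ τ)

lemma powQuotient_mul (σ τ t : ℝ) :
    powQuotient σ τ t * (Real.exp t - 1 : ℝ) =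
      logCutoff t * Real.exp (σ * t) * (Real.exp (τ * t) - 1 : ℝ) := by
  have := expSlope_ofReal_ne_zero t
  have hτ := mul_expSlope (τ * t)
  have h1 := mul_expSlope t
  simp only [powQuotient, HasCompactSupport.toSchwartzMap_toFun]
  push_cast
  rw [← hτ, ← h1]
  field_simp

end PowQuotient

namespace FC

/-- The logarithm of the weight `1 + k²`. -/
def logWt (k : ℤ) : ℝ := Real.log (1 + (k : ℝ) ^ 2)

/-- The matrix of the commutator of the Fourier multiplier `wt τ` with multiplication by `v`. -/
def commKernel (τ : ℝ) (v : FC) (k l : ℤ) : ℂ := (wt τ k - wt τ l : ℝ) * v (k - l)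

lemma wt_eq_exp (s : ℝ) (k : ℤ) : wt s k = Real.exp (s * logWt k) := by
  rw [wt, logWt, Real.rpow_def_of_pos (by positivity), mul_comm]

lemma wt_mul_wt_neg (s : ℝ) (k l : ℤ) :
    wt s k * wt (-s) l = Real.exp (s * (logWt k - logWt l)) := by
  rw [wt_eq_exp, wt_eq_exp, ← Real.exp_add]
  ring_nf

lemma powQuotient_half (τ : ℝ) (k l : ℤ) :
    powQuotient (1 / 2) τ (logWt k - logWt l) =
      wt (1 / 2) k * wt (-(1 / 2)) l * powQuotient 0 τ (logWt k - logWt l) := by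
  rw [← Complex.ofReal_mul, wt_mul_wt_neg]
  simp only [powQuotient, HasCompactSupport.toSchwartzMap_toFun]
  push_cast
  rw [zero_mul, Complex.exp_zero]
  ring

lemma logCutoff_mul_commKernel (τ : ℝ) (v : FC) (k l : ℤ) :
    logCutoff (logWt k - logWt l) * commKernel τ v k l * (Complex.I * l * wt (-τ) l) =
      powQuotient 0 τ (logWt k + -logWt l) * (1 * D1 v (k - l) * (l ^ 2 * wt (-1) l)) +
      powQuotient (1 / 2) τ (logWt k + -logWt l) *
        (k * wt (-(1 / 2)) k * D1 v (k - l) * (l * wt (-(1 / 2)) l)) := by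
  have quotient := powQuotient_mul 0 τ (logWt k - logWt l)
  have cancel (s : ℝ) (m : ℤ) : (wt s m : ℂ) * wt (-s) m = 1 := by
    rw [← Complex.ofReal_mul, wt_mul_wt_neg]
    simp
  have one_eq : (wt (-1) l : ℂ) = wt (-(1 / 2)) l * wt (-(1 / 2)) l := by
    rw [← Complex.ofReal_mul, ← wt_add]
    norm_num
  rw [zero_mul, Real.exp_zero, ← wt_mul_wt_neg, ← one_mul (logWt k - logWt l), ← wt_mul_wt_neg,
    wt_one, one_mul] at quotient
  have hτ := cancel τ l
  have h1 := cancel 1 l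
  have hhalf := cancel (1 / 2) k
  rw [wt_one] at h1
  rw [← sub_eq_add_neg, powQuotient_half, commKernel, D1]
  push_cast at quotient h1 ⊢
  rw [one_eq] at h1 quotient ⊢
  linear_combination (-Complex.I * v (k - l) * l) * quotient -
    Complex.I * v (k - l) * l * logCutoff (logWt k - logWt l) * hτ +
    Complex.I * v (k - l) * l * powQuotient 0 τ (logWt k - logWt l) * h1 -
    Complex.I * v (k - l) * l * powQuotient 0 τ (logWt k - logWt l) * (k - l) * k *
      wt (-(1 / 2)) l ^ 2 * hhalf

/-- The part of `commKernel` between comparable frequencies. -/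
def nearCommKernel (τ : ℝ) (v : FC) (k l : ℤ) : ℂ :=
  logCutoff (logWt k - logWt l) * commKernel τ v k l

/-- The part of `commKernel` between frequencies of different size. -/
def farCommKernel (τ : ℝ) (v : FC) (k l : ℤ) : ℂ :=
  (1 - logCutoff (logWt k - logWt l) : ℝ) * commKernel τ v k l

lemma commKernel_eq_add (τ : ℝ) (v : FC) :
    commKernel τ v = fun k l ↦ nearCommKernel τ v k l + farCommKernel τ v k l := by
  ext k l
  simp only [nearCommKernel, farCommKernel]
  push_cast
  ring

section Commutator

variable {τ : ℝ} {v : FC} {M S : ℝ}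

lemma norm_intCast_mul_wt_le (k : ℤ) : ‖(k : ℂ) * wt (-(1 / 2)) k‖ ≤ 1 := by
  rw [norm_mul, Complex.norm_intCast, Complex.norm_real, Real.norm_of_nonneg (wt_pos _ k).le]
  calc _ ≤ wt (1 / 2) k * wt (-(1 / 2)) k := by
        gcongr
        exacts [(wt_pos _ k).le, abs_le_wt le_rfl k]
    _ = 1 := by simp [wt_mul_wt_neg]

lemma kernelBound_nearCommKernel_mul (hv : KernelBound (fun k l ↦ D1 v (k - l)) M) (τ : ℝ) :
    KernelBound (fun k l ↦ nearCommKernel τ v k l * (Complex.I * l * wt (-τ) l))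
      ((wienerNorm (powQuotient 0 τ) + wienerNorm (powQuotient (1 / 2) τ)) * M) := by
  have hsq (l : ℤ) : ‖(l : ℂ) ^ 2 * wt (-1) l‖ ≤ 1 := by
    have : (l : ℂ) ^ 2 * wt (-1) l = (l * wt (-(1 / 2)) l) ^ 2 := by
      rw [mul_pow, ← Complex.ofReal_pow, sq (wt _ l), ← wt_add]
      norm_num
    rw [this, norm_pow]
    exact pow_le_one₀ (norm_nonneg _) (norm_intCast_mul_wt_le l)
  have h0 := (hv.diag_mul (fun _ ↦ norm_one.le) hsq).schwartz_mul (powQuotient 0 τ) logWt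
    fun l ↦ -logWt l
  have h1 := (hv.diag_mul norm_intCast_mul_wt_le norm_intCast_mul_wt_le).schwartz_mul
    (powQuotient (1 / 2) τ) logWt fun l ↦ -logWt l
  convert h0.add h1 using 1
  · ext k l
    exact logCutoff_mul_commKernel τ v k l
  · ring

lemma wt_le_of_logCutoff_lt_one (hτ : 0 ≤ τ) {k l : ℤ}
    (h : logCutoff (logWt k - logWt l) < 1) :
    wt τ k ≤ 4 ^ τ * wt τ (k - l) ∧ wt τ l ≤ 4 ^ τ * wt τ (k - l) := by
  have log_four_lt : Real.log 4 < |logWt k - logWt l| := by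
    by_contra! hle
    exact h.ne (logCutoff.one_of_mem_closedBall (by simpa [logCutoff] using hle))
  have separated : 4 * (1 + (l : ℝ) ^ 2) < 1 + (k : ℝ) ^ 2 ∨
      4 * (1 + (k : ℝ) ^ 2) < 1 + (l : ℝ) ^ 2 := by
    refine (lt_abs.1 log_four_lt).imp (fun h ↦ ?_) fun h ↦ ?_ <;>
      refine (Real.log_lt_log_iff (by positivity) (by positivity)).1 ?_ <;>
      rw [Real.log_mul (by norm_num) (by positivity)] <;>
      simp only [logWt] at h <;>
      linarith
  have raise {x : ℝ} (hx : 0 ≤ x) (h : x ≤ 4 * (1 + ((k - l : ℤ) : ℝ) ^ 2)) :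
      x ^ τ ≤ 4 ^ τ * wt τ (k - l) := by
    rw [wt, ← Real.mul_rpow (by norm_num) (by positivity)]
    exact Real.rpow_le_rpow hx h hτ
  constructor <;> refine raise (by positivity) ?_ <;> push_cast <;>
    rcases separated with h | h <;>
    nlinarith [sq_nonneg ((k : ℝ) - 2 * l), sq_nonneg (2 * (k : ℝ) - l)]

lemma kernelBound_farCommKernel (hτ : 0 ≤ τ) (hv : ∀ F : Finset ℤ, ∑ m ∈ F, wt τ m * ‖v m‖ ≤ S) :
    KernelBound (farCommKernel τ v) (4 ^ τ * S) := by
  refine kernelBound_of_norm_le_sub (w := fun m ↦ 4 ^ τ * (wt τ m * ‖v m‖)) (fun k l ↦ ?_)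
    fun F ↦ by rw [← mul_sum]; gcongr; exact hv F
  rw [farCommKernel, commKernel, norm_mul, norm_mul, Complex.norm_real, Complex.norm_real,
    ← mul_assoc, ← mul_assoc]
  refine mul_le_mul_of_nonneg_right ?_ (norm_nonneg _)
  rcases (logCutoff.le_one (x := logWt k - logWt l)).eq_or_lt with h | h
  · rw [h, sub_self, norm_zero, zero_mul]
    exact mul_nonneg (by positivity) (wt_pos _ _).le
  · obtain ⟨hk, hl⟩ := wt_le_of_logCutoff_lt_one hτ h
    refine (mul_le_of_le_one_left (norm_nonneg (wt τ k - wt τ l)) ?_).trans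
      (abs_sub_le_of_nonneg_of_le (wt_pos τ k).le hk (wt_pos τ l).le hl)
    rw [Real.norm_of_nonneg (sub_nonneg.2 h.le)]
    linarith [logCutoff.nonneg (x := logWt k - logWt l)]

lemma norm_kernelForm_nearCommKernel_le (hv : KernelBound (fun k l ↦ D1 v (k - l)) M) (τ : ℝ)
    (ζ : FC) (F : Finset ℤ) :
    ‖kernelForm (nearCommKernel τ v) F F (D1 ζ) (fun k ↦ wt τ k * ζ k)‖ ≤
      (wienerNorm (powQuotient 0 τ) + wienerNorm (powQuotient (1 / 2) τ)) * M *
        ∑ k ∈ F, ‖(wt τ k : ℂ) * ζ k‖ ^ 2 := by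
  have hD1 : D1 ζ = fun l ↦ Complex.I * l * wt (-τ) l * (wt τ l * ζ l) := by
    ext l
    have cancel : (wt (-τ) l : ℂ) * wt τ l = 1 := by
      rw [← Complex.ofReal_mul, ← wt_add]
      simp [wt]
    rw [D1]
    linear_combination (-Complex.I * l * ζ l) * cancel
  have form_eq : kernelForm (nearCommKernel τ v) F F (D1 ζ) (fun k ↦ wt τ k * ζ k) =
      kernelForm (fun k l ↦ nearCommKernel τ v k l * (Complex.I * l * wt (-τ) l)) F F
        (fun l ↦ wt τ l * ζ l) (fun k ↦ wt τ k * ζ k) := by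
    rw [hD1]
    simpa using (kernelForm_diag_mul (fun _ ↦ 1) (nearCommKernel τ v) _ F F _ _).symm
  rw [form_eq]
  linarith [kernelBound_nearCommKernel_mul hv τ F F (fun l ↦ wt τ l * ζ l) fun k ↦ wt τ k * ζ k]

lemma norm_kernelForm_farCommKernel_le {N : ℝ} {ζ : FC} (hτ : 0 ≤ τ)
    (hv : ∀ F : Finset ℤ, ∑ m ∈ F, wt τ m * ‖v m‖ ≤ S)
    (hζ : KernelBound (fun k l ↦ D1 ζ (k - l)) N) (w : FC) (F : Finset ℤ) :
    ‖kernelForm (farCommKernel τ v) F F (D1 ζ) w‖ ≤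
      4 ^ τ * N * ((S ^ 2 + ∑ k ∈ F, ‖w k‖ ^ 2) / 2) := by
  have norm_D1_le : ∑ k ∈ F, ‖D1 ζ k‖ ^ 2 ≤ N ^ 2 := by simpa using hζ.sum_norm_sq_col_le F 0
  have hN := hζ.nonneg
  set W := ∑ k ∈ F, ‖w k‖ ^ 2
  refine le_of_sq_le_sq ?_ (by positivity)
  calc _ ≤ (4 ^ τ * S) ^ 2 * _ * W := (kernelBound_farCommKernel hτ hv).norm_kernelForm_sq_le ..
    _ ≤ (4 ^ τ * S) ^ 2 * N ^ 2 * W := by gcongr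
    _ ≤ _ := by nlinarith [mul_nonneg (sq_nonneg (4 ^ τ * N)) (sq_nonneg (S ^ 2 - W))]

lemma exists_norm_kernelForm_commKernel_le (hτ : 0 ≤ τ) :
    ∃ C, 0 ≤ C ∧ ∀ (v ζ : FC) (M N S : ℝ) (F : Finset ℤ),
      KernelBound (fun k l ↦ D1 v (k - l)) M → KernelBound (fun k l ↦ D1 ζ (k - l)) N →
      (∀ F' : Finset ℤ, ∑ m ∈ F', wt τ m * ‖v m‖ ≤ S) →
      ‖kernelForm (commKernel τ v) F F (D1 ζ) (fun k ↦ wt τ k * ζ k)‖ ≤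
        C * (M + N) * (S ^ 2 + ∑ k ∈ F, ‖(wt τ k : ℂ) * ζ k‖ ^ 2) := by
  set K := wienerNorm (powQuotient 0 τ) + wienerNorm (powQuotient (1 / 2) τ)
  have hK : 0 ≤ K := add_nonneg (wienerNorm_nonneg _) (wienerNorm_nonneg _)
  refine ⟨K + 4 ^ τ, by positivity, fun v ζ M N S F hM hN hS ↦ ?_⟩
  have near : _ ≤ K * M * _ := norm_kernelForm_nearCommKernel_le hM τ ζ F
  have far := norm_kernelForm_farCommKernel_le hτ hS hN (fun k ↦ wt τ k * ζ k) F
  set W := ∑ k ∈ F, ‖(wt τ k : ℂ) * ζ k‖ ^ 2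
  have hM0 := hM.nonneg
  have hN0 := hN.nonneg
  have hW : 0 ≤ W := by positivity
  rw [commKernel_eq_add, kernelForm_add]
  refine (norm_add_le_of_le near far).trans ?_
  calc _ ≤ K * (M + N) * (S ^ 2 + W) + 4 ^ τ * (M + N) * (S ^ 2 + W) := by
        gcongr <;> nlinarith
    _ = _ := by ring

end Commutator

end FC

/-- A real-valued Schwartz function regarded as a complex-valued one. -/
def complexSchwartz (f : 𝓢(ℝ, ℝ)) : 𝓢(ℝ, ℂ) := SchwartzMap.postcompCLM Complex.ofRealCLM f

lemma complexSchwartz_apply (f : 𝓢(ℝ, ℝ)) (x : ℝ) : complexSchwartz f x = f x := rfl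

namespace FC

section Mollifier

variable {M : ℝ} {u : FC} (jhat : 𝓢(ℝ, ℝ)) (ε : ℝ)

lemma norm_Jmol_le (c : FC) (k : ℤ) :
    ‖Jmol jhat ε c k‖ ≤ wienerNorm (complexSchwartz jhat) * ‖c k‖ := by
  rw [Jmol, mult, norm_mul, ← complexSchwartz_apply]
  gcongr
  exact norm_le_wienerNorm _ _

lemma norm_mul_Jmol_le (c : FC) (k : ℤ) :
    ‖(ε * k : ℂ) * Jmol jhat ε c k‖ ≤ SchwartzMap.seminorm ℝ 1 0 jhat * ‖c k‖ := by
  have := SchwartzMap.norm_pow_mul_le_seminorm ℝ jhat 1 (ε * k)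
  rw [Jmol, mult, ← mul_assoc, norm_mul, norm_mul, ← Complex.ofReal_intCast, ← Complex.ofReal_mul,
    Complex.norm_real, Complex.norm_real]
  gcongr
  simpa using this

lemma kernelBound_D1_Jmol (hu : KernelBound (fun k l ↦ D1 u (k - l)) M) :
    KernelBound (fun k l ↦ D1 (Jmol jhat ε u) (k - l)) (wienerNorm (complexSchwartz jhat) * M) := by
  convert hu.schwartz_mul (complexSchwartz jhat) (fun k ↦ ε * k) (fun l ↦ -(ε * l)) using 3 with k l
  simp only [D1, Jmol, mult, complexSchwartz_apply]
  push_cast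
  ring_nf

lemma kernelBound_dslope_mul_D1 (hu : KernelBound (fun k l ↦ D1 u (k - l)) M) :
    KernelBound (fun k l ↦ dslope (complexSchwartz jhat) (-(ε * (k - l : ℤ))) (ε * (k - l : ℤ)) *
        D1 u (k - l))
      (wienerNorm (SchwartzMap.derivCLM ℂ ℂ (complexSchwartz jhat)) * M) := by
  convert hu.dslope_mul (complexSchwartz jhat) (fun k ↦ -(ε * k)) (fun k ↦ ε * k)
    (fun l ↦ ε * l) (fun l ↦ -(ε * l)) using 5 <;> push_cast <;> ring

lemma Jmol_sub_conj (hu : isReal u) (m : ℤ) :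
    Complex.I * (Jmol jhat ε u m - conj (Jmol jhat ε u (-m))) =
      dslope (complexSchwartz jhat) (-(ε * m)) (ε * m) * D1 u m * (2 * ε) := by
  have slope := sub_smul_dslope (complexSchwartz jhat) (-(ε * m)) (ε * m)
  rw [complexSchwartz_apply, complexSchwartz_apply, Complex.real_smul] at slope
  simp only [Jmol, mult, D1, hu m, map_mul, Complex.conj_conj, Complex.conj_ofReal]
  push_cast [mul_neg] at slope ⊢
  linear_combination (-Complex.I * u m) * slope

lemma kernelForm_transport_add_conj (v w : FC) (F : Finset ℤ) :
    kernelForm (fun k l ↦ v (k - l)) F F (D1 w) w +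
        conj (kernelForm (fun k l ↦ v (k - l)) F F (D1 w) w) =
      kernelForm (fun k l ↦ Complex.I * (v (k - l) - conj (v (-(k - l))))) F F w
        (fun k ↦ k * w k) - kernelForm (fun k l ↦ D1 v (k - l)) F F w w := by
  have conj_eq : conj (kernelForm (fun k l ↦ v (k - l)) F F (D1 w) w) =
      ∑ k ∈ F, ∑ l ∈ F, conj (v (l - k)) * conj (D1 w k) * w l := by
    simp only [kernelForm, map_sum, map_mul, Complex.conj_conj]
    exact sum_comm
  rw [conj_eq]
  simp only [kernelForm, ← sum_add_distrib, ← sum_sub_distrib]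
  refine sum_congr rfl fun k _ ↦ sum_congr rfl fun l _ ↦ ?_
  simp only [D1, map_mul, Complex.conj_I, map_intCast, neg_sub]
  push_cast
  ring

lemma abs_re_kernelForm_transport_le (hu : isReal u)
    (hM : KernelBound (fun k l ↦ D1 u (k - l)) M) (w : FC) (F : Finset ℤ) :
    |(kernelForm (fun k l ↦ Jmol jhat ε u (k - l)) F F (D1 w) w).re| ≤
      (wienerNorm (SchwartzMap.derivCLM ℂ ℂ (complexSchwartz jhat)) +
        wienerNorm (complexSchwartz jhat)) * M *
          ∑ k ∈ F, (‖w k‖ ^ 2 + ‖(ε * k : ℂ) * w k‖ ^ 2) := by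
  set T := kernelForm (fun k l ↦ Jmol jhat ε u (k - l)) F F (D1 w) w
  have odd_part := kernelBound_dslope_mul_D1 jhat ε hM F F w fun k ↦ 2 * (ε * k * w k)
  have even_part := kernelBound_D1_Jmol jhat ε hM F F w w
  have split : ((2 * T.re : ℝ) : ℂ) =
      kernelForm (fun k l ↦ dslope (complexSchwartz jhat) (-(ε * (k - l : ℤ))) (ε * (k - l : ℤ)) *
        D1 u (k - l)) F F w (fun k ↦ 2 * (ε * k * w k)) -
      kernelForm (fun k l ↦ D1 (Jmol jhat ε u) (k - l)) F F w w := by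
    rw [← Complex.add_conj, kernelForm_transport_add_conj]
    simp only [Jmol_sub_conj jhat ε hu]
    congr 1
    refine sum_congr rfl fun k _ ↦ sum_congr rfl fun l _ ↦ ?_
    simp only [map_mul, Complex.conj_ofReal, map_intCast, map_ofNat]
    ring
  have two_mul_abs_le := norm_sub_le_of_le odd_part even_part
  rw [← split, Complex.norm_real, Real.norm_eq_abs, abs_mul, abs_two] at two_mul_abs_le
  simp only [norm_mul _ (_ * w _), mul_pow, Complex.norm_ofNat, ← mul_sum] at two_mul_abs_le
  rw [sum_add_distrib]
  set K' := wienerNorm (SchwartzMap.derivCLM ℂ ℂ (complexSchwartz jhat))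
  set K := wienerNorm (complexSchwartz jhat)
  set W := ∑ k ∈ F, ‖w k‖ ^ 2
  set W' := ∑ k ∈ F, ‖(ε * k : ℂ) * w k‖ ^ 2
  have hK' : 0 ≤ K' * M := mul_nonneg (wienerNorm_nonneg _) hM.nonneg
  have hK : 0 ≤ K * M := mul_nonneg (wienerNorm_nonneg _) hM.nonneg
  have hW : 0 ≤ W := by positivity
  have hW' : 0 ≤ W' := by positivity
  linarith [mul_nonneg hK' hW, mul_nonneg hK hW, mul_nonneg hK hW']

end Mollifier

section FiniteEstimate

lemma kernelForm_wt_mul (τ : ℝ) (v ζ : FC) (F : Finset ℤ) :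
    kernelForm (fun k l ↦ wt (2 * τ) k * v (k - l)) F F (D1 ζ) ζ =
      kernelForm (commKernel τ v) F F (D1 ζ) (fun k ↦ wt τ k * ζ k) +
      kernelForm (fun k l ↦ v (k - l)) F F (D1 fun k ↦ wt τ k * ζ k) (fun k ↦ wt τ k * ζ k) := by
  simp only [kernelForm, ← sum_add_distrib]
  refine sum_congr rfl fun k _ ↦ sum_congr rfl fun l _ ↦ ?_
  simp only [commKernel, D1, two_mul, wt_add, map_mul, Complex.conj_ofReal]
  push_cast
  ring

lemma norm_wt_mul_sq (τ : ℝ) (z : ℂ) (k : ℤ) : ‖(wt τ k : ℂ) * z‖ ^ 2 = wt (2 * τ) k * ‖z‖ ^ 2 := by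
  rw [norm_mul, mul_pow, Complex.norm_real, Real.norm_eq_abs, sq_abs, two_mul, wt_add, sq (wt τ k)]

lemma sum_wt_mul_norm_Jmol_le (jhat : 𝓢(ℝ, ℝ)) (τ ε : ℝ) (u : FC) (F : Finset ℤ) :
    ∑ k ∈ F, wt τ k * ‖Jmol jhat ε u k‖ ≤
      wienerNorm (complexSchwartz jhat) * ∑ k ∈ F, wt τ k * ‖u k‖ := by
  rw [mul_sum]
  refine sum_le_sum fun k _ ↦ ?_
  rw [mul_left_comm]
  gcongr
  exacts [(wt_pos _ k).le, norm_Jmol_le jhat ε u k]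

lemma sum_norm_wt_mul_Jmol_sq_le (jhat : 𝓢(ℝ, ℝ)) (τ ε : ℝ) (η : FC) (F : Finset ℤ) :
    ∑ k ∈ F, ‖(wt τ k : ℂ) * Jmol jhat ε η k‖ ^ 2 ≤
      wienerNorm (complexSchwartz jhat) ^ 2 * ∑ k ∈ F, wt (2 * τ) k * ‖η k‖ ^ 2 := by
  rw [mul_sum]
  refine sum_le_sum fun k _ ↦ ?_
  rw [norm_wt_mul_sq, mul_left_comm, ← mul_pow]
  gcongr
  exacts [(wt_pos _ k).le, norm_Jmol_le jhat ε η k]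

lemma sum_norm_mul_wt_mul_Jmol_sq_le (jhat : 𝓢(ℝ, ℝ)) (τ ε : ℝ) (η : FC) (F : Finset ℤ) :
    ∑ k ∈ F, ‖(ε * k : ℂ) * (wt τ k * Jmol jhat ε η k)‖ ^ 2 ≤
      SchwartzMap.seminorm ℝ 1 0 jhat ^ 2 * ∑ k ∈ F, wt (2 * τ) k * ‖η k‖ ^ 2 := by
  rw [mul_sum]
  refine sum_le_sum fun k _ ↦ ?_
  rw [mul_left_comm, norm_wt_mul_sq, mul_left_comm, ← mul_pow]
  gcongr
  exacts [(wt_pos _ k).le, norm_mul_Jmol_le jhat ε η k]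

lemma exists_abs_re_kernelForm_Jmol_le (jhat : 𝓢(ℝ, ℝ)) {τ : ℝ} (hτ : 0 ≤ τ) :
    ∃ C, 0 ≤ C ∧ ∀ (ε : ℝ) (u η : FC) (M N S : ℝ) (F : Finset ℤ), isReal u →
      KernelBound (fun k l ↦ D1 u (k - l)) M → KernelBound (fun k l ↦ D1 η (k - l)) N →
      (∀ F' : Finset ℤ, ∑ m ∈ F', wt τ m * ‖u m‖ ≤ S) →
      |(kernelForm (fun k l ↦ wt (2 * τ) k * Jmol jhat ε u (k - l)) F F
          (D1 (Jmol jhat ε η)) (Jmol jhat ε η)).re| ≤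
        C * (M + N) * (S ^ 2 + ∑ k ∈ F, wt (2 * τ) k * ‖η k‖ ^ 2) := by
  obtain ⟨C₀, hC₀, commutator_le⟩ := exists_norm_kernelForm_commKernel_le hτ
  set K := wienerNorm (complexSchwartz jhat)
  set K' := wienerNorm (SchwartzMap.derivCLM ℂ ℂ (complexSchwartz jhat))
  set P := SchwartzMap.seminorm ℝ 1 0 jhat
  have hK : 0 ≤ K := wienerNorm_nonneg _
  have hK' : 0 ≤ K' := wienerNorm_nonneg _
  refine ⟨C₀ * K ^ 3 + (K' + K) * (K ^ 2 + P ^ 2), by positivity,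
    fun ε u η M N S F hu hM hN hS ↦ ?_⟩
  set v := Jmol jhat ε u
  set ζ := Jmol jhat ε η
  set E := ∑ k ∈ F, wt (2 * τ) k * ‖η k‖ ^ 2
  have hE : 0 ≤ E := sum_nonneg fun k _ ↦ mul_nonneg (wt_pos _ k).le (sq_nonneg _)
  have hM0 := hM.nonneg
  have hN0 := hN.nonneg
  have commutator := commutator_le v ζ (K * M) (K * N) (K * S) F
    (kernelBound_D1_Jmol jhat ε hM) (kernelBound_D1_Jmol jhat ε hN)
    fun F' ↦ (sum_wt_mul_norm_Jmol_le jhat τ ε u F').trans (by gcongr; exact hS F')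
  have transport := abs_re_kernelForm_transport_le jhat ε hu hM (fun k ↦ wt τ k * ζ k) F
  have hW := sum_norm_wt_mul_Jmol_sq_le jhat τ ε η F
  have hW' := sum_norm_mul_wt_mul_Jmol_sq_le jhat τ ε η F
  rw [kernelForm_wt_mul, Complex.add_re]
  calc _ ≤ C₀ * (K * M + K * N) * ((K * S) ^ 2 + K ^ 2 * E) +
        (K' + K) * M * (K ^ 2 * E + P ^ 2 * E) := by
        refine (abs_add_le _ _).trans (add_le_add ?_ ?_)
        · refine (Complex.abs_re_le_norm _).trans (commutator.trans ?_)
          gcongr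
        · rw [sum_add_distrib] at transport
          refine transport.trans ?_
          gcongr
    _ ≤ C₀ * (K * M + K * N) * ((K * S) ^ 2 + K ^ 2 * E) +
        (K' + K) * (M + N) * ((K ^ 2 + P ^ 2) * (S ^ 2 + E)) := by
        gcongr
        · linarith
        · nlinarith [mul_nonneg (add_nonneg (sq_nonneg K) (sq_nonneg P)) (sq_nonneg S)]
    _ = _ := by ring

end FiniteEstimate

section Limit

open Filter Topology

lemma tendsto_kernelForm {ι : Type*} {a : ι → ι → ℂ} {f g : ι → ℂ}
    (h : Summable fun q : ι × ι ↦ a q.1 q.2 * f q.2 * conj (g q.1)) :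
    Tendsto (fun F ↦ kernelForm a F F f g) atTop
      (𝓝 (∑' k, ∑' l, a k l * f l * conj (g k))) := by
  rw [← h.tsum_prod]
  simpa only [kernelForm, Function.comp_def, sum_product] using
    h.hasSum.comp (tendsto_finsetProd_atTop.comp tendsto_atTop_diagonal)

lemma hsInner_Jmol_mul (r : ℝ) (m : ℝ → ℝ) (ε : ℝ) (v d η : FC) :
    hsInner r (Jmol m ε (mul v d)) η =
      (∑' k, ∑' l, (wt r k * v (k - l)) * d l * conj (Jmol m ε η k)).re := by
  rw [hsInner]
  congr 1
  refine tsum_congr fun k ↦ ?_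
  simp only [Jmol, mult, mul]
  rw [← (Equiv.subLeft k).tsum_eq fun j ↦ v j * d (k - j), ← tsum_mul_left, ← tsum_mul_right,
    ← tsum_mul_left]
  refine tsum_congr fun l ↦ ?_
  simp only [Equiv.subLeft_apply, sub_sub_cancel, map_mul, Complex.conj_ofReal]
  ring

lemma summable_wt_mul_convolution {r D : ℝ} {v d g : FC} (hv : Summable fun k ↦ ‖v k‖)
    (hd : Summable fun k ↦ ‖d k‖) (hg : ∀ k, wt r k * ‖g k‖ ≤ D) :
    Summable fun q : ℤ × ℤ ↦ (wt r q.1 * v (q.1 - q.2)) * d q.2 * conj (g q.1) := by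
  have shear : Function.Injective fun q : ℤ × ℤ ↦ (q.1 - q.2, q.2) :=
    Function.LeftInverse.injective (g := fun q ↦ (q.1 + q.2, q.2)) fun q ↦ by simp
  have prod := (hv.mul_of_nonneg hd (fun _ ↦ norm_nonneg _) fun _ ↦ norm_nonneg _).comp_injective
    shear
  refine (prod.mul_left D).of_norm_bounded fun q ↦ ?_
  rw [norm_mul, norm_mul, norm_mul, RCLike.norm_conj, Complex.norm_real,
    Real.norm_of_nonneg (wt_pos _ _).le]
  calc _ = wt r q.1 * ‖g q.1‖ * (‖v (q.1 - q.2)‖ * ‖d q.2‖) := by ring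
    _ ≤ _ := mul_le_mul_of_nonneg_right (hg q.1) (by positivity)

lemma exists_wt_mul_norm_Jmol_le (jhat : 𝓢(ℝ, ℝ)) {ε B : ℝ} {c : FC} (hε : ε ≠ 0) (r : ℝ)
    (hc : ∀ k, ‖c k‖ ≤ B) : ∃ D, ∀ k, wt r k * ‖Jmol jhat ε c k‖ ≤ D := by
  obtain ⟨n, hn⟩ := exists_nat_ge r
  have decay (x : ℝ) := SchwartzMap.one_add_le_sup_seminorm_apply (𝕜 := ℝ) (m := (2 * n, 0))
    (k := 2 * n) (n := 0) le_rfl le_rfl jhat x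
  set D := (2 : ℝ) ^ (2 * n) * ((Iic (2 * n, 0)).sup fun m ↦ SchwartzMap.seminorm ℝ m.1 m.2) jhat
  refine ⟨(1 + (ε⁻¹) ^ 2) ^ n * D * B, fun k ↦ ?_⟩
  have base : 1 + (k : ℝ) ^ 2 ≤ (1 + (ε⁻¹) ^ 2) * (1 + ‖ε * k‖) ^ 2 := by
    have hk : (k : ℝ) ^ 2 = (ε⁻¹) ^ 2 * ‖ε * k‖ ^ 2 := by
      rw [Real.norm_eq_abs, sq_abs]
      field_simp
    nlinarith [norm_nonneg (ε * k), mul_nonneg (sq_nonneg ε⁻¹) (norm_nonneg (ε * k)),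
      sq_nonneg ε⁻¹]
  have hwt : wt r k ≤ (1 + (ε⁻¹) ^ 2) ^ n * (1 + ‖ε * k‖) ^ (2 * n) := by
    calc wt r k ≤ wt n k := wt_mono hn k
      _ = (1 + (k : ℝ) ^ 2) ^ n := Real.rpow_natCast _ _
      _ ≤ _ := by
        rw [pow_mul, ← mul_pow]
        gcongr
  have hj := decay (ε * k)
  rw [norm_iteratedFDeriv_zero] at hj
  rw [Jmol, mult, norm_mul, Complex.norm_real]
  calc _ ≤ ((1 + (ε⁻¹) ^ 2) ^ n * (1 + ‖ε * k‖) ^ (2 * n)) * (‖jhat (ε * k)‖ * B) := by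
        gcongr
        exact hc k
    _ = (1 + (ε⁻¹) ^ 2) ^ n * ((1 + ‖ε * k‖) ^ (2 * n) * ‖jhat (ε * k)‖) * B := by ring
    _ ≤ _ := by
        gcongr
        exact (norm_nonneg _).trans (hc 0)

lemma D1_Jmol (m : ℝ → ℝ) (ε : ℝ) (c : FC) : D1 (Jmol m ε c) = Jmol m ε (D1 c) := by
  ext k
  simp only [D1, Jmol, mult]
  ring

lemma summable_norm_Jmol (jhat : 𝓢(ℝ, ℝ)) (ε : ℝ) {c : FC} (hc : Summable fun k ↦ ‖c k‖) :
    Summable fun k ↦ ‖Jmol jhat ε c k‖ :=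
  (hc.mul_left _).of_nonneg_of_le (fun _ ↦ norm_nonneg _) (norm_Jmol_le jhat ε c)

lemma summable_wt_mul_Jmol (jhat : 𝓢(ℝ, ℝ)) {ε : ℝ} {u η : FC} (hε : ε ≠ 0) (r : ℝ)
    (hu : Summable fun k ↦ ‖u k‖) (hη : Summable fun k ↦ ‖η k‖)
    (hDη : Summable fun k ↦ ‖D1 η k‖) :
    Summable fun q : ℤ × ℤ ↦ (wt r q.1 * Jmol jhat ε u (q.1 - q.2)) *
      D1 (Jmol jhat ε η) q.2 * conj (Jmol jhat ε η q.1) := by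
  obtain ⟨D, hD⟩ := exists_wt_mul_norm_Jmol_le jhat hε r fun k ↦
    hη.le_tsum k fun _ _ ↦ norm_nonneg _
  refine summable_wt_mul_convolution (summable_norm_Jmol jhat ε hu) ?_ hD
  rw [D1_Jmol]
  exact summable_norm_Jmol jhat ε hDη

lemma abs_hsInner_Jmol_mul_le (jhat : 𝓢(ℝ, ℝ)) {r ε B : ℝ} {u η : FC} (hε : ε ≠ 0)
    (hu : Summable fun k ↦ ‖u k‖) (hη : Summable fun k ↦ ‖η k‖)
    (hDη : Summable fun k ↦ ‖D1 η k‖)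
    (hB : ∀ F : Finset ℤ, |(kernelForm (fun k l ↦ wt r k * Jmol jhat ε u (k - l)) F F
      (D1 (Jmol jhat ε η)) (Jmol jhat ε η)).re| ≤ B) :
    |hsInner r (Jmol jhat ε (mul (Jmol jhat ε u) (D1 (Jmol jhat ε η)))) η| ≤ B := by
  have limit := tendsto_kernelForm (a := fun k l ↦ wt r k * Jmol jhat ε u (k - l))
    (f := D1 (Jmol jhat ε η)) (g := Jmol jhat ε η) (summable_wt_mul_Jmol jhat hε r hu hη hDη)
  rw [hsInner_Jmol_mul]
  exact le_of_tendsto ((Complex.continuous_re.tendsto _).comp limit).abs (.of_forall hB)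

end Limit

end FC

theorem statement13_general (s : ℝ) (hs : 5 / 2 < s) (jhat : 𝓢(ℝ, ℝ)) :
    ∃ C > (0 : ℝ), ∀ ε : ℝ, ε ≠ 0 → ∀ u η : FC,
      FC.memHs s u → FC.memHs (s - 1) η → FC.isReal u →
      |FC.hsInner (s - 1)
          (FC.Jmol jhat ε (FC.mul (FC.Jmol jhat ε u) (FC.D1 (FC.Jmol jhat ε η)))) η|
        ≤ C * (FC.linfty (FC.D1 u) + FC.linfty (FC.D1 η))
            * (FC.hsNorm s u ^ 2 + FC.hsNorm (s - 1) η ^ 2) := by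
  obtain ⟨C, hC, finite_le⟩ :=
    FC.exists_abs_re_kernelForm_Jmol_le jhat (τ := (s - 1) / 2) (by linarith)
  rw [mul_div_cancel₀ _ two_ne_zero] at finite_le
  set A := ∑' k, FC.wt (2 * ((s - 1) / 2) - s) k
  have hA : 0 ≤ A := tsum_nonneg fun k ↦ (FC.wt_pos _ k).le
  refine ⟨C * (A + 1) + 1, by positivity, fun ε hε u η hu hη hur ↦ ?_⟩
  have hDη := FC.summable_norm_D1 hη (by linarith)
  have kernel_u := FC.kernelBound_linfty (FC.summable_norm_D1 hu (by linarith))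
  have kernel_η := FC.kernelBound_linfty hDη
  have hM := kernel_u.nonneg
  have hN := kernel_η.nonneg
  refine FC.abs_hsInner_Jmol_mul_le jhat hε (FC.summable_norm hu (by linarith))
    (FC.summable_norm hη (by linarith)) hDη fun F ↦ ?_
  refine (finite_le ε u η _ _ _ F hur kernel_u kernel_η
    (FC.sum_wt_mul_norm_le hu (by linarith))).trans ?_
  rw [mul_pow, Real.sq_sqrt hA]
  set U := FC.hsNorm s u ^ 2
  set H := FC.hsNorm (s - 1) η ^ 2
  calc _ ≤ C * (FC.linfty (FC.D1 u) + FC.linfty (FC.D1 η)) * ((A + 1) * (U + H)) := by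
        gcongr
        nlinarith [FC.sum_wt_mul_norm_sq_le hη F, mul_nonneg hA (sq_nonneg (FC.hsNorm (s - 1) η)),
          sq_nonneg (FC.hsNorm s u)]
    _ = C * (A + 1) * (FC.linfty (FC.D1 u) + FC.linfty (FC.D1 η)) * (U + H) := by ring
    _ ≤ _ := by
        gcongr
        linarith

/-- Let `s > 5/2` and let `j` be a fixed Schwartz mollifier, i.e. `ĵ` is a
Schwartz function with `0 ≤ ĵ ≤ 1` and `ĵ(x) = 1` for `|x| ≤ 1`.  There is `C = C(s) > 0`
such that for all `ε ∈ (0,1)`, `u ∈ H^s(𝕋)` and `η ∈ H^{s-1}(𝕋)`: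
`|(J_ε(J_ε u · ∂ₓ J_ε η), η)_{H^{s-1}}| ≤ C (‖∂ₓu‖_{L^∞} + ‖∂ₓη‖_{L^∞}) (‖u‖²_{H^s} + ‖η‖²_{H^{s-1}})`. -/
theorem statement13 (s : ℝ) (hs : 5 / 2 < s) (jhat : SchwartzMap ℝ ℝ)
    (hj0 : ∀ x : ℝ, 0 ≤ jhat x) (hj1 : ∀ x : ℝ, jhat x ≤ 1)
    (hjone : ∀ x : ℝ, |x| ≤ 1 → jhat x = 1) :
    ∃ C > (0 : ℝ), ∀ ε : ℝ, ε ∈ Set.Ioo (0 : ℝ) 1 → ∀ u η : FC,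
      FC.memHs s u → FC.memHs (s - 1) η → FC.isReal u → FC.isReal η →
      |FC.hsInner (s - 1)
          (FC.Jmol (⇑jhat) ε (FC.mul (FC.Jmol (⇑jhat) ε u) (FC.D1 (FC.Jmol (⇑jhat) ε η)))) η|
        ≤ C * (FC.linfty (FC.D1 u) + FC.linfty (FC.D1 η))
            * (FC.hsNorm s u ^ 2 + FC.hsNorm (s - 1) η ^ 2) :=
  (statement13_general s hs jhat).imp fun _ ⟨hC, estimate⟩ ↦
    ⟨hC, fun ε hε u η hu hη hur _ ↦ estimate ε hε.1.ne' u η hu hη hur⟩
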